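/- Define cov : ℝ⁶ → ℝ by cov(x₁, …, x₆) = 2 G((x₁+x₄)/2, (x₂+x₅)/2, (x₃+x₆)/2). Then cov is a C¹-smooth convex function, and for each m ∈ {1, …, 6}, ∂cov/∂x_m = α_m, where α_{m+3} = α_m for m = 1, 2, 3 and (α₁, α₂, α₃) are the inner angles of the generalized Euclidean triangle of edge lengths e^{(x₁+x₄)/2}, e^{(x₂+x₅)/2}, e^{(x₃+x₆)/2}, with α_m opposite the edge of length e^{(x_m+x_{m+3})/2}. -/

import Mathlib

/-- The Lobachevsky function `Λ(t) = -∫₀ᵗ log |2 sin s| ds`. -/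
noncomputable def Lob (t : ℝ) : ℝ := -∫ s in (0 : ℝ)..t, Real.log |2 * Real.sin s|

/-- The inner angle, opposite the edge of length `x i`, of the generalized Euclidean
triangle of edge lengths `x 0, x 1, x 2` (clamped arccos convention). -/
noncomputable def ang (i : Fin 3) (x : Fin 3 → ℝ) : ℝ :=
  Real.arccos (((x (i + 1)) ^ 2 + (x (i + 2)) ^ 2 - (x i) ^ 2) / (2 * x (i + 1) * x (i + 2)))

/-- `G(y) = Σᵢ (Λ(aᵢ) + aᵢ yᵢ)`, where `aᵢ` are the inner angles of the generalized
Euclidean triangle of edge lengths `e^{y₁}, e^{y₂}, e^{y₃}`. -/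
noncomputable def Gfn (y : Fin 3 → ℝ) : ℝ :=
  ∑ i : Fin 3,
    (Lob (ang i (fun m => Real.exp (y m))) + ang i (fun m => Real.exp (y m)) * y i)

/-- `cov(x₁,…,x₆) = 2 G((x₁+x₄)/2, (x₂+x₅)/2, (x₃+x₆)/2)` (coordinates indexed by
`Fin 6`, with coordinates `m` and `m+3` corresponding to opposite edges). -/
noncomputable def covFn (x : Fin 6 → ℝ) : ℝ :=
  2 * Gfn (fun m : Fin 3 =>
    (x ⟨m.val, by have := m.isLt; omega⟩ + x ⟨m.val + 3, by have := m.isLt; omega⟩) / 2)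

/-!
The function `G` is a Legendre transform: `G(y)` is the maximum of `∑ᵢ (Λ(bᵢ) + bᵢ yᵢ)` over the
simplex of nonnegative angles `b` with sum `π`, attained at the angles of the triangle with edge
lengths `exp yᵢ`. Hence those angles form a subgradient of `G` at `y`; as they depend continuously
on `y`, and a function with a continuous field of subgradients is `C¹` and convex with that field
as gradient, everything follows.

The maximum property rests on the concavity of `∑ᵢ Λ(aᵢ)` on the simplex, which amounts to the
positive semidefiniteness of `∑ᵢ uᵢ² cot aᵢ` on `∑ᵢ uᵢ = 0`. By the law of sines the angles of a
nondegenerate triangle are a critical point. When the longest edge equals the sum of the other two,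
the property survives as a limit; when that edge grows further, `G` grows with slope `π` and the
competitors with slope `bᵢ ≤ π`.
-/

open Set Filter Topology EuclideanGeometry
open scoped Real

section Subgradient

theorem convexOn_of_subgradient {E : Type*} [AddCommGroup E] [Module ℝ E] {s : Set E}
    (hs : Convex ℝ s) {f : E → ℝ} {L : E → E →ₗ[ℝ] ℝ}
    (h : ∀ y ∈ s, ∀ z ∈ s, f y + L y (z - y) ≤ f z) : ConvexOn ℝ s f := by
  refine ⟨hs, fun x hx y hy a b ha hb hab => ?_⟩
  set w := a • x + b • y with hw
  have hws : w ∈ s := hs hx hy ha hb hab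
  have hbary : a * L w (x - w) + b * L w (y - w) = 0 := by
    rw [← smul_eq_mul, ← smul_eq_mul, ← map_smul, ← map_smul, ← map_add, smul_sub, smul_sub,
      sub_add_sub_comm, ← hw, ← add_smul, hab, one_smul, sub_self, map_zero]
  calc f w = a * (f w + L w (x - w)) + b * (f w + L w (y - w)) := by
        linear_combination (-f w) * hab - hbary
    _ ≤ a • f x + b • f y := by
        simp only [smul_eq_mul]
        gcongr
        exacts [h w hws x hx, h w hws y hy]

variable {E : Type*} [NormedAddCommGroup E] [NormedSpace ℝ E] {f : E → ℝ} {L : E → E →L[ℝ] ℝ}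

theorem hasFDerivAt_of_continuousAt_subgradient (h : ∀ y z, f y + L y (z - y) ≤ f z) {y : E}
    (hL : ContinuousAt L y) : HasFDerivAt f (L y) y := by
  rw [hasFDerivAt_iff_isLittleO, Asymptotics.isLittleO_iff]
  intro c hc
  filter_upwards [Metric.tendsto_nhds.1 hL c hc] with z hz
  have hlower : 0 ≤ f z - f y - L y (z - y) := by linarith [h y z]
  have hupper : f z - f y - L y (z - y) ≤ (L z - L y) (z - y) := by
    have hneg : L z (y - z) = -L z (z - y) := by rw [← map_neg, neg_sub]
    rw [sub_apply]
    linarith [h z y]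
  rw [Real.norm_of_nonneg hlower]
  calc f z - f y - L y (z - y) ≤ ‖(L z - L y) (z - y)‖ := hupper.trans (Real.le_norm_self _)
    _ ≤ ‖L z - L y‖ * ‖z - y‖ := (L z - L y).le_opNorm _
    _ ≤ c * ‖z - y‖ := by
        rw [← dist_eq_norm]
        gcongr

theorem contDiff_one_of_continuous_subgradient (h : ∀ y z, f y + L y (z - y) ≤ f z)
    (hL : Continuous L) : ContDiff ℝ 1 f :=
  contDiff_one_iff_hasFDerivAt.2
    ⟨L, hL, fun _ => hasFDerivAt_of_continuousAt_subgradient h hL.continuousAt⟩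

end Subgradient

section Lobachevsky

theorem intervalIntegrable_log_abs_two_mul_sin (a b : ℝ) :
    IntervalIntegrable (fun s => Real.log |2 * Real.sin s|) MeasureTheory.volume a b :=
  MeromorphicOn.intervalIntegrable_log_norm fun x _ =>
    (show AnalyticAt ℝ (fun s : ℝ => 2 * Real.sin s) x by fun_prop).meromorphicAt

theorem continuous_Lob : Continuous Lob :=
  (intervalIntegral.continuous_primitive intervalIntegrable_log_abs_two_mul_sin 0).neg

theorem hasDerivAt_Lob {t : ℝ} (ht : Real.sin t ≠ 0) :
    HasDerivAt Lob (-Real.log (2 * Real.sin t)) t := by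
  have hcont : ContinuousAt (fun s => Real.log |2 * Real.sin s|) t := by
    have : |2 * Real.sin t| ≠ 0 := by positivity
    fun_prop (disch := assumption)
  have hmeas : Measurable fun s => Real.log |2 * Real.sin s| := by fun_prop
  rw [← Real.log_abs]
  exact (intervalIntegral.integral_hasDerivAt_right (intervalIntegrable_log_abs_two_mul_sin 0 t)
    hmeas.stronglyMeasurable.stronglyMeasurableAtFilter hcont).neg

end Lobachevsky

section Cotangent

variable {a b c : ℝ}

theorem cot_mul_cot_add_cyclic_eq_one (ha : Real.sin a ≠ 0) (hb : Real.sin b ≠ 0)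
    (hc : Real.sin c ≠ 0) (h : a + b + c = π) :
    Real.cot a * Real.cot b + Real.cot b * Real.cot c + Real.cot c * Real.cot a = 1 := by
  obtain rfl : c = π - (a + b) := by linarith
  simp only [Real.cot_eq_cos_div_sin, Real.sin_pi_sub, Real.cos_pi_sub] at hc ⊢
  field_simp
  rw [Real.cos_add, Real.sin_add]
  ring

theorem cot_add_cot_pos (ha : 0 < a) (hb : 0 < b) (h : a + b < π) :
    0 < Real.cot a + Real.cot b := by
  have hsa := Real.sin_pos_of_pos_of_lt_pi ha (by linarith)
  have hsb := Real.sin_pos_of_pos_of_lt_pi hb (by linarith)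
  have hsab := Real.sin_pos_of_pos_of_lt_pi (add_pos ha hb) h
  have : Real.cot a + Real.cot b = Real.sin (a + b) / (Real.sin a * Real.sin b) := by
    rw [Real.cot_eq_cos_div_sin, Real.cot_eq_cos_div_sin, Real.sin_add]
    field_simp
    ring
  rw [this]
  positivity

theorem cot_quadratic_nonneg {u v w : ℝ} (ha : 0 < a) (hb : 0 < b) (hc : 0 < c)
    (h : a + b + c = π) (huvw : u + v + w = 0) :
    0 ≤ u ^ 2 * Real.cot a + v ^ 2 * Real.cot b + w ^ 2 * Real.cot c := by
  have hcyc := cot_mul_cot_add_cyclic_eq_one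
    (Real.sin_pos_of_pos_of_lt_pi ha (by linarith)).ne'
    (Real.sin_pos_of_pos_of_lt_pi hb (by linarith)).ne'
    (Real.sin_pos_of_pos_of_lt_pi hc (by linarith)).ne' h
  obtain rfl : w = -(u + v) := by linarith
  have hsq : (Real.cot a + Real.cot b) *
      (u ^ 2 * Real.cot a + v ^ 2 * Real.cot b + (-(u + v)) ^ 2 * Real.cot c) =
      (u * Real.cot a - v * Real.cot b) ^ 2 + (u + v) ^ 2 := by
    linear_combination (u + v) ^ 2 * hcyc
  refine nonneg_of_mul_nonneg_right ?_ (cot_add_cot_pos ha hb (by linarith))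
  rw [hsq]
  positivity

end Cotangent

section AngleSimplex

/-- The closed simplex of triples of nonnegative angles with sum `π`, the possible inner angles of
a generalized Euclidean triangle. -/
def angleSimplex : Set (Fin 3 → ℝ) := {a | (∀ i, 0 ≤ a i) ∧ ∑ i, a i = π}

/-- The relative interior of `angleSimplex`: the angle triples of nondegenerate triangles. -/
def openAngleSimplex : Set (Fin 3 → ℝ) := {a | (∀ i, 0 < a i) ∧ ∑ i, a i = π}

variable {a b : Fin 3 → ℝ}

theorem sin_pos_of_mem_openAngleSimplex (ha : a ∈ openAngleSimplex) (i : Fin 3) :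
    0 < Real.sin (a i) := by
  refine Real.sin_pos_of_pos_of_lt_pi (ha.1 i) (ha.2 ▸ ?_)
  exact Finset.single_lt_sum (j := i + 1) (by simp) (Finset.mem_univ _) (Finset.mem_univ _)
    (ha.1 _) fun k _ _ => (ha.1 k).le

theorem lineMap_mem_openAngleSimplex (ha : a ∈ openAngleSimplex) (hb : b ∈ angleSimplex) {t : ℝ}
    (ht : t ∈ Ico (0 : ℝ) 1) : AffineMap.lineMap a b t ∈ openAngleSimplex := by
  obtain ⟨ht0, ht1⟩ := ht
  simp only [openAngleSimplex, mem_ofPred_eq, AffineMap.lineMap_apply_module, Pi.add_apply,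
    Pi.smul_apply, smul_eq_mul, Finset.sum_add_distrib, ← Finset.mul_sum, ha.2, hb.2]
  refine ⟨fun i => ?_, by ring⟩
  have := mul_pos (sub_pos.2 ht1) (ha.1 i)
  have := mul_nonneg ht0 (hb.1 i)
  linarith

theorem sum_sq_mul_cot_nonneg (ha : a ∈ openAngleSimplex) {u : Fin 3 → ℝ} (hu : ∑ i, u i = 0) :
    0 ≤ ∑ i, u i ^ 2 * Real.cot (a i) := by
  obtain ⟨hpos, hsum⟩ := ha
  rw [Fin.sum_univ_three] at *
  exact cot_quadratic_nonneg (hpos 0) (hpos 1) (hpos 2) hsum hu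

theorem hasDerivAt_lineMap_apply {ι : Type*} (a b : ι → ℝ) (t : ℝ) (i : ι) :
    HasDerivAt (fun s => AffineMap.lineMap a b s i) (b i - a i) t := by
  simp only [AffineMap.pi_lineMap_apply]
  exact AffineMap.hasDerivAt_lineMap

theorem hasDerivAt_sum_Lob_lineMap {t : ℝ} (ht : AffineMap.lineMap a b t ∈ openAngleSimplex) :
    HasDerivAt (fun s => ∑ i, Lob (AffineMap.lineMap a b s i))
      (∑ i, -Real.log (2 * Real.sin (AffineMap.lineMap a b t i)) * (b i - a i)) t :=
  HasDerivAt.fun_sum fun i _ =>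
    HasDerivAt.comp (h₂ := Lob) t (hasDerivAt_Lob (sin_pos_of_mem_openAngleSimplex ht i).ne')
      (hasDerivAt_lineMap_apply a b t i)

theorem hasDerivAt_sum_log_two_mul_sin_lineMap {t : ℝ}
    (ht : AffineMap.lineMap a b t ∈ openAngleSimplex) :
    HasDerivAt
      (fun s => ∑ i, -Real.log (2 * Real.sin (AffineMap.lineMap a b s i)) * (b i - a i))
      (-∑ i, (b i - a i) ^ 2 * Real.cot (AffineMap.lineMap a b t i)) t := by
  rw [← Finset.sum_neg_distrib]
  refine HasDerivAt.fun_sum fun i _ => ?_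
  have hsin := sin_pos_of_mem_openAngleSimplex ht i
  refine ((((hasDerivAt_lineMap_apply a b t i).sin.const_mul 2).log
    (by positivity)).fun_neg.mul_const (b i - a i)).congr_deriv ?_
  rw [Real.cot_eq_cos_div_sin]
  field_simp

theorem concaveOn_sum_Lob_lineMap (ha : a ∈ openAngleSimplex) (hb : b ∈ angleSimplex) :
    ConcaveOn ℝ (Icc 0 1) fun t : ℝ => ∑ i, Lob (AffineMap.lineMap a b t i) := by
  have hmem : ∀ t ∈ interior (Icc (0 : ℝ) 1), AffineMap.lineMap a b t ∈ openAngleSimplex := by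
    rw [interior_Icc]
    exact fun t ht => lineMap_mem_openAngleSimplex ha hb (Ioo_subset_Ico_self ht)
  have hcont : Continuous fun t : ℝ => ∑ i, Lob (AffineMap.lineMap a b t i) :=
    continuous_finsetSum _ fun i _ => continuous_Lob.comp <|
      (continuous_apply i).comp AffineMap.lineMap_continuous
  have hsub : ∑ i, (b i - a i) = 0 := by rw [Finset.sum_sub_distrib, ha.2, hb.2, sub_self]
  exact concaveOn_of_hasDerivWithinAt2_nonpos (convex_Icc 0 1) hcont.continuousOn
    (fun t ht => (hasDerivAt_sum_Lob_lineMap (hmem t ht)).hasDerivWithinAt)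
    (fun t ht => (hasDerivAt_sum_log_two_mul_sin_lineMap (hmem t ht)).hasDerivWithinAt)
    fun t ht => neg_nonpos.2 (sum_sq_mul_cot_nonneg (hmem t ht) hsub)

theorem sum_Lob_le_tangent (ha : a ∈ openAngleSimplex) (hb : b ∈ angleSimplex) :
    ∑ i, Lob (b i) ≤ ∑ i, Lob (a i) - ∑ i, Real.log (2 * Real.sin (a i)) * (b i - a i) := by
  have hslope := (concaveOn_sum_Lob_lineMap ha hb).slope_le_of_hasDerivAt
    (left_mem_Icc.2 zero_le_one) (right_mem_Icc.2 zero_le_one) zero_lt_one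
    (hasDerivAt_sum_Lob_lineMap (by simpa using ha))
  simp only [slope_def_field, AffineMap.lineMap_apply_zero, AffineMap.lineMap_apply_one, sub_zero,
    div_one, neg_mul, Finset.sum_neg_distrib] at hslope
  linarith

end AngleSimplex

section Triangle

theorem fin_three_add_one_add_one (i : Fin 3) : i + 1 + 1 = i + 2 := by grind

theorem fin_three_add_one_add_two (i : Fin 3) : i + 1 + 2 = i := by grind

theorem fin_three_add_two_add_one (i : Fin 3) : i + 2 + 1 = i := by grind

theorem fin_three_add_two_add_two (i : Fin 3) : i + 2 + 2 = i + 1 := by grind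

theorem forall_fin_three_iff {P : Fin 3 → Prop} (i : Fin 3) :
    (∀ j, P j) ↔ P i ∧ P (i + 1) ∧ P (i + 2) := by
  refine ⟨fun h => ⟨h _, h _, h _⟩, fun ⟨h₀, h₁, h₂⟩ j => ?_⟩
  obtain rfl | rfl | rfl : j = i ∨ j = i + 1 ∨ j = i + 2 := by clear * -; decide +revert
  exacts [h₀, h₁, h₂]

variable {x : Fin 3 → ℝ}

theorem ang_zero_eq_arccos (x : Fin 3 → ℝ) :
    ang 0 x = Real.arccos ((x 1 ^ 2 + x 2 ^ 2 - x 0 ^ 2) / (2 * x 1 * x 2)) := rfl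

theorem exists_dist_eq_of_le_add (hx : ∀ i, 0 < x i) (h : ∀ i, x i ≤ x (i + 1) + x (i + 2)) :
    ∃ p : Fin 3 → ℂ, ∀ i, dist (p (i + 1)) (p (i + 2)) = x i := by
  have h0 : x 0 ≤ x 1 + x 2 := h 0
  have h1 : x 1 ≤ x 2 + x 0 := h 1
  have h2 : x 2 ≤ x 0 + x 1 := h 2
  have hx0 := hx 0
  have hx1 := hx 1
  have hx2 := hx 2
  have hcos : Real.cos (ang 0 x) * (2 * x 1 * x 2) = x 1 ^ 2 + x 2 ^ 2 - x 0 ^ 2 := by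
    rw [ang_zero_eq_arccos, Real.cos_arccos, div_mul_cancel₀ _ (by positivity)]
    · rw [le_div_iff₀ (by positivity)]
      nlinarith
    · rw [div_le_iff₀ (by positivity)]
      nlinarith
  refine ⟨![0, x 2, x 1 * Complex.exp (ang 0 x * Complex.I)], fun i => ?_⟩
  fin_cases i
  · change dist (x 2 : ℂ) (x 1 * Complex.exp (ang 0 x * Complex.I)) = x 0
    rw [dist_eq_norm, ← sq_eq_sq₀ (norm_nonneg _) hx0.le, Complex.sq_norm, Complex.normSq_apply]
    simp only [Complex.sub_re, Complex.sub_im, Complex.re_ofReal_mul, Complex.im_ofReal_mul,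
      Complex.ofReal_re, Complex.ofReal_im, Complex.exp_ofReal_mul_I_re,
      Complex.exp_ofReal_mul_I_im]
    linear_combination x 1 ^ 2 * Real.sin_sq_add_cos_sq (ang 0 x) - hcos
  · change dist (x 1 * Complex.exp (ang 0 x * Complex.I)) 0 = x 1
    simp [Complex.norm_exp_ofReal_mul_I, hx1.le]
  · change dist 0 (x 2 : ℂ) = x 2
    simp [hx2.le]

theorem ang_eq_angle {V P : Type*} [NormedAddCommGroup V] [InnerProductSpace ℝ V] [MetricSpace P]
    [NormedAddTorsor V P] {p : Fin 3 → P} (hp : ∀ i, dist (p (i + 1)) (p (i + 2)) = x i)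
    (i : Fin 3) : ang i x = ∠ (p (i + 1)) (p i) (p (i + 2)) := by
  have h₁ : dist (p (i + 2)) (p i) = x (i + 1) := by
    rw [← hp (i + 1), fin_three_add_one_add_one, fin_three_add_one_add_two]
  have h₂ : dist (p (i + 1)) (p i) = x (i + 2) := by
    rw [← hp (i + 2), dist_comm, fin_three_add_two_add_one, fin_three_add_two_add_two]
  rw [ang, EuclideanGeometry.angle, InnerProductGeometry.angle,
    real_inner_eq_norm_mul_self_add_norm_mul_self_sub_norm_sub_mul_self_div_two,
    vsub_sub_vsub_cancel_right, ← dist_eq_norm_vsub, ← dist_eq_norm_vsub, ← dist_eq_norm_vsub,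
    hp, h₁, h₂, div_div]
  ring_nf

theorem sum_ang_eq_pi (hx : ∀ i, 0 < x i) (h : ∀ i, x i ≤ x (i + 1) + x (i + 2)) :
    ∑ i, ang i x = π := by
  obtain ⟨p, hp⟩ := exists_dist_eq_of_le_add hx h
  have hne : p 0 ≠ p 1 := dist_pos.1 ((hx 2).trans_eq (hp 2).symm)
  rw [Fin.sum_univ_three, ang_eq_angle hp, ang_eq_angle hp, ang_eq_angle hp, add_right_comm]
  exact angle_add_angle_add_angle_eq_pi (p 2) hne

theorem sin_ang_mul_eq_sin_ang_mul (hx : ∀ i, 0 < x i) (h : ∀ i, x i ≤ x (i + 1) + x (i + 2))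
    (i : Fin 3) : Real.sin (ang i x) * x (i + 1) = Real.sin (ang (i + 1) x) * x i := by
  obtain ⟨p, hp⟩ := exists_dist_eq_of_le_add hx h
  have hlaw := law_sin (p (i + 1)) (p i) (p (i + 2))
  rw [ang_eq_angle hp, ang_eq_angle hp, ← hp i, ← hp (i + 1), fin_three_add_one_add_one,
    fin_three_add_one_add_two]
  rwa [dist_comm (p i), dist_comm (p (i + 2)) (p (i + 1))] at hlaw

theorem forall_lt_add_of_longest_lt_add (hx : ∀ i, 0 < x i) {i : Fin 3} (h₁ : x (i + 1) < x i)
    (h₂ : x (i + 2) < x i) (h : x i < x (i + 1) + x (i + 2)) :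
    ∀ j, x j < x (j + 1) + x (j + 2) := by
  rw [forall_fin_three_iff i, fin_three_add_one_add_one, fin_three_add_one_add_two,
    fin_three_add_two_add_one, fin_three_add_two_add_two]
  exact ⟨h, h₁.trans (lt_add_of_pos_left _ (hx _)), h₂.trans (lt_add_of_pos_right _ (hx _))⟩

theorem ang_pos_of_lt_add (hx : ∀ i, 0 < x i) (h : ∀ i, x i < x (i + 1) + x (i + 2))
    (i : Fin 3) : 0 < ang i x := by
  have h₁ := h (i + 1)
  have h₂ := h (i + 2)
  rw [fin_three_add_one_add_one, fin_three_add_one_add_two] at h₁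
  rw [fin_three_add_two_add_one, fin_three_add_two_add_two] at h₂
  have hx₁ := hx (i + 1)
  have hx₂ := hx (i + 2)
  rw [ang, Real.arccos_pos, div_lt_one (by positivity)]
  nlinarith

theorem ang_mem_openAngleSimplex (hx : ∀ i, 0 < x i) (h : ∀ i, x i < x (i + 1) + x (i + 2)) :
    (fun i => ang i x) ∈ openAngleSimplex :=
  ⟨ang_pos_of_lt_add hx h, sum_ang_eq_pi hx fun i => (h i).le⟩

theorem ang_eq_single_of_add_le (hx : ∀ i, 0 < x i) {i : Fin 3}
    (h : x (i + 1) + x (i + 2) ≤ x i) : (fun j => ang j x) = Pi.single i π := by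
  have hx₀ := hx i
  have hx₁ := hx (i + 1)
  have hx₂ := hx (i + 2)
  refine funext <| (forall_fin_three_iff i).2 ⟨?_, ?_, ?_⟩
  · rw [Pi.single_eq_same]
    refine Real.arccos_of_le_neg_one ?_
    rw [div_le_iff₀ (by positivity)]
    nlinarith
  · rw [Pi.single_eq_of_ne (by simp)]
    refine Real.arccos_of_one_le ?_
    rw [fin_three_add_one_add_one, fin_three_add_one_add_two, le_div_iff₀ (by positivity)]
    nlinarith
  · rw [Pi.single_eq_of_ne (by simp)]
    refine Real.arccos_of_one_le ?_
    rw [fin_three_add_two_add_one, fin_three_add_two_add_two, le_div_iff₀ (by positivity)]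
    nlinarith

theorem exists_log_eq_add_log_two_mul_sin_ang (hx : ∀ i, 0 < x i)
    (h : ∀ i, x i < x (i + 1) + x (i + 2)) :
    ∃ k, ∀ i, Real.log (x i) = k + Real.log (2 * Real.sin (ang i x)) := by
  have hstep (i : Fin 3) : Real.log (x (i + 1)) - Real.log (2 * Real.sin (ang (i + 1) x)) =
      Real.log (x i) - Real.log (2 * Real.sin (ang i x)) := by
    have hsin := sin_pos_of_mem_openAngleSimplex (ang_mem_openAngleSimplex hx h)
    have hlaw := congrArg Real.log (sin_ang_mul_eq_sin_ang_mul hx (fun j => (h j).le) i)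
    rw [Real.log_mul (hsin i).ne' (hx _).ne', Real.log_mul (hsin _).ne' (hx i).ne'] at hlaw
    rw [Real.log_mul two_ne_zero (hsin i).ne', Real.log_mul two_ne_zero (hsin _).ne']
    linarith
  have h10 := hstep 0
  have h21 := hstep 1
  refine ⟨Real.log (x 0) - Real.log (2 * Real.sin (ang 0 x)), fun i => ?_⟩
  fin_cases i
  · exact (sub_add_cancel _ _).symm
  · exact sub_eq_iff_eq_add.1 h10
  · exact sub_eq_iff_eq_add.1 (h21.trans h10)

end Triangle

section Duality

/-- The inner angles of the generalized Euclidean triangle as functions of the logarithms `y` of its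
edge lengths; this is the gradient of `Gfn`. -/
noncomputable def logAngles (y : Fin 3 → ℝ) : Fin 3 → ℝ := fun i => ang i fun m => Real.exp (y m)

/-- The objective `∑ᵢ (Λ(aᵢ) + aᵢ yᵢ)` of the variational principle behind `Gfn`, with the angles
`a` and the logarithmic edge lengths `y` varying independently. -/
noncomputable def angleEnergy (a y : Fin 3 → ℝ) : ℝ := ∑ i, (Lob (a i) + a i * y i)

variable {b y : Fin 3 → ℝ}

theorem Gfn_eq_angleEnergy (y : Fin 3 → ℝ) : Gfn y = angleEnergy (logAngles y) y := rfl

theorem angleEnergy_eq_add_sum (a y z : Fin 3 → ℝ) :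
    angleEnergy a z = angleEnergy a y + ∑ i, a i * (z i - y i) := by
  rw [angleEnergy, angleEnergy, ← Finset.sum_add_distrib]
  exact Finset.sum_congr rfl fun i _ => by ring

theorem angleEnergy_update (a y : Fin 3 → ℝ) (i : Fin 3) (t : ℝ) :
    angleEnergy a (Function.update y i t) = angleEnergy a y + a i * (t - y i) := by
  rw [angleEnergy_eq_add_sum a y, Fintype.sum_eq_single i fun j hj => by simp [hj],
    Function.update_self]

theorem continuous_logAngles : Continuous logAngles :=
  continuous_pi fun _ => Real.continuous_arccos.comp <|
    Continuous.div (by fun_prop) (by fun_prop) fun _ => by positivity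

theorem continuous_angleEnergy : Continuous fun p : (Fin 3 → ℝ) × (Fin 3 → ℝ) =>
    angleEnergy p.1 p.2 := by
  have := continuous_Lob
  unfold angleEnergy
  fun_prop

theorem continuous_Gfn : Continuous Gfn :=
  continuous_angleEnergy.comp (continuous_logAngles.prodMk continuous_id)

theorem logAngles_eq_single_of_add_le {i : Fin 3}
    (h : Real.exp (y (i + 1)) + Real.exp (y (i + 2)) ≤ Real.exp (y i)) :
    logAngles y = Pi.single i π :=
  ang_eq_single_of_add_le (x := fun m => Real.exp (y m)) (fun _ => Real.exp_pos _) h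

theorem logAngles_mem_angleSimplex (y : Fin 3 → ℝ) : logAngles y ∈ angleSimplex := by
  refine ⟨fun i => Real.arccos_nonneg _, ?_⟩
  by_cases h : ∀ i, Real.exp (y i) ≤ Real.exp (y (i + 1)) + Real.exp (y (i + 2))
  · exact sum_ang_eq_pi (fun _ => Real.exp_pos _) h
  · push Not at h
    obtain ⟨i, hi⟩ := h
    rw [logAngles_eq_single_of_add_le hi.le, Finset.sum_pi_single' i π, if_pos (Finset.mem_univ i)]

theorem angleEnergy_le_Gfn_of_lt_add (hb : b ∈ angleSimplex)
    (h : ∀ i, Real.exp (y i) < Real.exp (y (i + 1)) + Real.exp (y (i + 2))) :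
    angleEnergy b y ≤ Gfn y := by
  have hpos (i : Fin 3) : 0 < Real.exp (y i) := Real.exp_pos _
  have ha : logAngles y ∈ openAngleSimplex := ang_mem_openAngleSimplex hpos h
  obtain ⟨k, hk⟩ := exists_log_eq_add_log_two_mul_sin_ang hpos h
  have hy (i : Fin 3) : y i = k + Real.log (2 * Real.sin (logAngles y i)) := by
    rw [← Real.log_exp (y i), hk, logAngles]
  have hcrit : ∑ i, (b i - logAngles y i) * y i =
      ∑ i, Real.log (2 * Real.sin (logAngles y i)) * (b i - logAngles y i) := by
    rw [← sub_eq_zero, ← Finset.sum_sub_distrib]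
    calc _ = ∑ i, k * (b i - logAngles y i) :=
          Finset.sum_congr rfl fun i _ => by linear_combination (b i - logAngles y i) * hy i
      _ = 0 := by rw [← Finset.mul_sum, Finset.sum_sub_distrib, hb.2, ha.2, sub_self, mul_zero]
  have htangent := sum_Lob_le_tangent ha hb
  rw [← hcrit] at htangent
  simp only [sub_mul, Finset.sum_sub_distrib] at htangent
  simp only [Gfn_eq_angleEnergy, angleEnergy, Finset.sum_add_distrib]
  linarith

theorem angleEnergy_le_Gfn_of_eq_add (hb : b ∈ angleSimplex) {i : Fin 3}
    (h : Real.exp (y i) = Real.exp (y (i + 1)) + Real.exp (y (i + 2))) :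
    angleEnergy b y ≤ Gfn y := by
  have h₁ : y (i + 1) < y i :=
    Real.exp_lt_exp.1 (h ▸ lt_add_of_pos_right _ (Real.exp_pos _))
  have h₂ : y (i + 2) < y i :=
    Real.exp_lt_exp.1 (h ▸ lt_add_of_pos_left _ (Real.exp_pos _))
  have hshrink : ∀ᶠ t in 𝓝[<] y i,
      angleEnergy b (Function.update y i t) ≤ Gfn (Function.update y i t) := by
    filter_upwards [Ioo_mem_nhdsLT (max_lt h₁ h₂)] with t ⟨htmax, ht⟩
    obtain ⟨ht₁, ht₂⟩ := max_lt_iff.1 htmax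
    refine angleEnergy_le_Gfn_of_lt_add hb <|
      forall_lt_add_of_longest_lt_add (x := fun m => Real.exp (Function.update y i t m))
        (fun _ => Real.exp_pos _) (i := i) ?_ ?_ ?_
    · simpa using ht₁
    · simpa using ht₂
    · simpa [← h] using ht
  have hupdate : Tendsto (Function.update y i) (𝓝[<] y i) (𝓝 y) := by
    have : Continuous (Function.update y i) := by fun_prop
    simpa using (this.tendsto (y i)).mono_left nhdsWithin_le_nhds
  have henergy : Continuous (angleEnergy b) :=
    continuous_angleEnergy.comp (Continuous.prodMk_right b)
  exact le_of_tendsto_of_tendsto ((henergy.tendsto y).comp hupdate)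
    ((continuous_Gfn.tendsto y).comp hupdate) hshrink

theorem angleEnergy_le_Gfn_of_add_le (hb : b ∈ angleSimplex) {i : Fin 3}
    (h : Real.exp (y (i + 1)) + Real.exp (y (i + 2)) ≤ Real.exp (y i)) :
    angleEnergy b y ≤ Gfn y := by
  set s := Real.log (Real.exp (y (i + 1)) + Real.exp (y (i + 2)))
  have hexp : Real.exp s = Real.exp (y (i + 1)) + Real.exp (y (i + 2)) :=
    Real.exp_log (by positivity)
  have hsy : s ≤ y i := by rwa [← Real.exp_le_exp, hexp]
  have heq : Real.exp (Function.update y i s i) =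
      Real.exp (Function.update y i s (i + 1)) + Real.exp (Function.update y i s (i + 2)) := by
    simpa using hexp
  have hbound := angleEnergy_le_Gfn_of_eq_add hb heq
  rw [Gfn_eq_angleEnergy, logAngles_eq_single_of_add_le heq.ge, angleEnergy_update,
    angleEnergy_update, Pi.single_eq_same] at hbound
  rw [Gfn_eq_angleEnergy, logAngles_eq_single_of_add_le h]
  have hbi : b i ≤ π := hb.2 ▸ Finset.single_le_sum (fun j _ => hb.1 j) (Finset.mem_univ i)
  linarith [mul_nonneg (sub_nonneg.2 hbi) (sub_nonneg.2 hsy)]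

theorem angleEnergy_le_Gfn (hb : b ∈ angleSimplex) (y : Fin 3 → ℝ) : angleEnergy b y ≤ Gfn y := by
  by_cases h : ∀ i, Real.exp (y i) < Real.exp (y (i + 1)) + Real.exp (y (i + 2))
  · exact angleEnergy_le_Gfn_of_lt_add hb h
  · push Not at h
    obtain ⟨i, hi⟩ := h
    exact angleEnergy_le_Gfn_of_add_le hb hi

/-- The linear form with coefficients `logAngles y`, the derivative of `Gfn` at `y`. -/
noncomputable def angleForm (y : Fin 3 → ℝ) : (Fin 3 → ℝ) →L[ℝ] ℝ :=
  ∑ i, logAngles y i • ContinuousLinearMap.proj i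

theorem angleForm_apply (y v : Fin 3 → ℝ) : angleForm y v = ∑ i, logAngles y i * v i := by
  simp [angleForm]

theorem continuous_angleForm : Continuous angleForm :=
  continuous_finsetSum _ fun i _ =>
    ((continuous_apply i).comp continuous_logAngles).smul continuous_const

theorem Gfn_add_angleForm_le (y z : Fin 3 → ℝ) : Gfn y + angleForm y (z - y) ≤ Gfn z := by
  have h := angleEnergy_le_Gfn (logAngles_mem_angleSimplex y) z
  rwa [angleEnergy_eq_add_sum _ y, ← Gfn_eq_angleEnergy] at h

theorem contDiff_Gfn : ContDiff ℝ 1 Gfn :=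
  contDiff_one_of_continuous_subgradient Gfn_add_angleForm_le continuous_angleForm

theorem convexOn_Gfn : ConvexOn ℝ univ Gfn :=
  convexOn_of_subgradient (L := fun y => (angleForm y : (Fin 3 → ℝ) →ₗ[ℝ] ℝ)) convex_univ
    fun y _ z _ => Gfn_add_angleForm_le y z

theorem hasFDerivAt_Gfn (y : Fin 3 → ℝ) : HasFDerivAt Gfn (angleForm y) y :=
  hasFDerivAt_of_continuousAt_subgradient Gfn_add_angleForm_le continuous_angleForm.continuousAt

end Duality

section Cov

/-- The linear map averaging the coordinates `m` and `m + 3` of opposite edges. -/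
noncomputable def oppositeMean : (Fin 6 → ℝ) →L[ℝ] (Fin 3 → ℝ) :=
  ContinuousLinearMap.pi fun i =>
    (2⁻¹ : ℝ) • (.proj (i.castLE (by norm_num)) + .proj (i.addNat 3) : (Fin 6 → ℝ) →L[ℝ] ℝ)

theorem oppositeMean_apply (x : Fin 6 → ℝ) (i : Fin 3) :
    oppositeMean x i = (x (i.castLE (by norm_num)) + x (i.addNat 3)) / 2 :=
  inv_mul_eq_div _ _

theorem oppositeMean_single (m : Fin 6) :
    oppositeMean (Pi.single m 1) = Pi.single ⟨m.val % 3, Nat.mod_lt _ (by norm_num)⟩ 2⁻¹ := by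
  ext i
  rw [oppositeMean_apply]
  fin_cases m <;> fin_cases i <;> simp [Fin.ext_iff]

theorem covFn_eq_comp : covFn = fun x => 2 * Gfn (oppositeMean x) := by
  ext x
  simp only [funext (oppositeMean_apply x)]
  rfl

theorem hasFDerivAt_covFn (x : Fin 6 → ℝ) :
    HasFDerivAt covFn ((2 : ℝ) • (angleForm (oppositeMean x)).comp oppositeMean) x := by
  rw [covFn_eq_comp]
  exact ((hasFDerivAt_Gfn _).comp x oppositeMean.hasFDerivAt).const_mul 2

end Cov

theorem stmt9 :
    ContDiff ℝ 1 covFn ∧ ConvexOn ℝ Set.univ covFn ∧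
    ∀ x : Fin 6 → ℝ, ∀ m : Fin 6,
      fderiv ℝ covFn x (Pi.single m 1) =
        ang ⟨m.val % 3, Nat.mod_lt _ (by norm_num)⟩
          (fun i : Fin 3 => Real.exp
            ((x ⟨i.val, by have := i.isLt; omega⟩ + x ⟨i.val + 3, by have := i.isLt; omega⟩) / 2)) := by
  refine ⟨?_, ?_, fun x m => ?_⟩
  · rw [covFn_eq_comp]
    exact contDiff_const.mul (contDiff_Gfn.comp oppositeMean.contDiff)
  · rw [covFn_eq_comp]
    exact (convexOn_Gfn.comp_linearMap oppositeMean.toLinearMap).smul zero_le_two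
  · set k : Fin 3 := ⟨m.val % 3, Nat.mod_lt _ (by norm_num)⟩
    calc fderiv ℝ covFn x (Pi.single m 1)
        = 2 * angleForm (oppositeMean x) (Pi.single k 2⁻¹) := by
          rw [(hasFDerivAt_covFn x).fderiv, ← oppositeMean_single]
          rfl
      _ = logAngles (oppositeMean x) k := by
          rw [angleForm_apply, Fintype.sum_eq_single k fun j hj => by simp [hj], Pi.single_eq_same]
          ring
      _ = _ := by
          rw [funext (oppositeMean_apply x)]
          rfl
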